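/- The F-vector space □̃_q has a basis consisting of the elements u v c₀^{n₀} c₁^{n₁} c₂^{n₂} c₃^{n₃}, where u = u₁u₂⋯u_r ranges over all finite words in the letters x₀, x₂ (r ∈ ℕ, each u_i ∈ {x₀, x₂}), v = v₁v₂⋯v_s ranges over all finite words in the letters x₁, x₃ (s ∈ ℕ, each v_i ∈ {x₁, x₃}), and n₀, n₁, n₂, n₃ range over ℤ. -/

import Mathlib

/-!
The defining relations let every odd letter `y ∈ {x₁, x₃}` be moved to the right past every even
letter `x ∈ {x₀, x₂}`: each of them has the form `y x = l • x y + (1 - l) • c` with `l = q²` or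
`l = q⁻²` and `c` one of the central generators. There is no relation between two even letters or
between two odd letters, so this rewriting has no ambiguities to resolve.

Accordingly, let `M` be the vector space with basis the triples `(u, v, n)`. The even letters act
on `M` by prepending to `u`, the `c_i^{±1}` by shifting `n`, and an odd letter acts by the rewriting
rule, by recursion on `u`. The relations hold for these operators essentially by definition, so `M`
becomes a `□̃_q`-module (`rep`). The linear map `toBox : M → □̃_q`, `(u, v, n) ↦ u v c^n`,
commutes with the action of the generators (`toBox_genOp`), hence is a module map; as it sends the
empty triple to `1`, it is onto, and this is the spanning statement. Conversely, `u v c^n` applied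
to the empty triple gives back the basis vector `(u, v, n)` (`rep_basisElt`), which gives linear
independence.
-/

noncomputable section

/-- The `q`-Serre expression `u³v − [3]_q u²vu + [3]_q uvu² − vu³`,
where `[3]_q = (q³ − q⁻³)/(q − q⁻¹)`. -/
def qSerre {F : Type*} [Field F] (q : F) {A : Type*} [Ring A] [Algebra F A] (u v : A) : A :=
  u ^ 3 * v - ((q ^ 3 - q⁻¹ ^ 3) / (q - q⁻¹)) • (u ^ 2 * v * u)
    + ((q ^ 3 - q⁻¹ ^ 3) / (q - q⁻¹)) • (u * v * u ^ 2) - v * u ^ 3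
/-- Generator indices for `□̃_q`: `Sum.inl i` is `x_i`, `Sum.inr (Sum.inl i)` is `c_i`,
and `Sum.inr (Sum.inr i)` is `c_i⁻¹`. -/
abbrev BTGen := (ZMod 4) ⊕ ((ZMod 4) ⊕ (ZMod 4))

/-- The free generator corresponding to `x_i`. -/
def btx (F : Type*) [Field F] (i : ZMod 4) : FreeAlgebra F BTGen :=
  FreeAlgebra.ι F (Sum.inl i)

/-- The free generator corresponding to `c_i`. -/
def btc (F : Type*) [Field F] (i : ZMod 4) : FreeAlgebra F BTGen :=
  FreeAlgebra.ι F (Sum.inr (Sum.inl i))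

/-- The free generator corresponding to `c_i⁻¹`. -/
def btcinv (F : Type*) [Field F] (i : ZMod 4) : FreeAlgebra F BTGen :=
  FreeAlgebra.ι F (Sum.inr (Sum.inr i))

/-- The defining relations of the algebra `□̃_q`. -/
inductive BoxTRel (F : Type*) [Field F] (q : F) :
    FreeAlgebra F BTGen → FreeAlgebra F BTGen → Prop
  | c_cinv (i : ZMod 4) : BoxTRel F q (btc F i * btcinv F i) 1
  | cinv_c (i : ZMod 4) : BoxTRel F q (btcinv F i * btc F i) 1
  | central_c (i : ZMod 4) (a : FreeAlgebra F BTGen) : BoxTRel F q (btc F i * a) (a * btc F i)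
  | central_cinv (i : ZMod 4) (a : FreeAlgebra F BTGen) :
      BoxTRel F q (btcinv F i * a) (a * btcinv F i)
  | weyl (i : ZMod 4) : BoxTRel F q
      ((q - q⁻¹)⁻¹ • (q • (btx F i * btx F (i + 1)) - q⁻¹ • (btx F (i + 1) * btx F i)))
      (btc F i)

/-- The algebra `□̃_q`. -/
abbrev BoxT (F : Type*) [Field F] (q : F) := RingQuot (BoxTRel F q)

/-- The generators `x_i` of `□̃_q`. -/
def xT (F : Type*) [Field F] (q : F) (i : ZMod 4) : BoxT F q :=
  RingQuot.mkAlgHom F (BoxTRel F q) (btx F i)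

/-- The central generators `c_i` of `□̃_q`. -/
def cT (F : Type*) [Field F] (q : F) (i : ZMod 4) : BoxT F q :=
  RingQuot.mkAlgHom F (BoxTRel F q) (btc F i)

/-- The central generators `c_i⁻¹` of `□̃_q`. -/
def cinvT (F : Type*) [Field F] (q : F) (i : ZMod 4) : BoxT F q :=
  RingQuot.mkAlgHom F (BoxTRel F q) (btcinv F i)

/-- Integer powers of the invertible element `c_i` in `□̃_q`. -/
def zpowC (F : Type*) [Field F] (q : F) (i : ZMod 4) : ℤ → BoxT F q
  | Int.ofNat n => cT F q i ^ n
  | Int.negSucc n => cinvT F q i ^ (n + 1)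

/-- The candidate basis vectors of `□̃_q`: a word `u` in `x₀, x₂`, times a word `v` in
`x₁, x₃`, times `c₀^{n₀} c₁^{n₁} c₂^{n₂} c₃^{n₃}`.  A letter `0 : Fin 2` in the first word
stands for `x₀` and a letter `1` for `x₂`; in the second word they stand for `x₁`, `x₃`. -/
def basisElt (F : Type*) [Field F] (q : F)
    (p : List (Fin 2) × List (Fin 2) × (ℤ × ℤ × ℤ × ℤ)) : BoxT F q :=
  (p.1.map (fun t => if t = 0 then xT F q 0 else xT F q 2)).prod *
    (p.2.1.map (fun t => if t = 0 then xT F q 1 else xT F q 3)).prod *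
    zpowC F q 0 p.2.2.1 * zpowC F q 1 p.2.2.2.1 *
    zpowC F q 2 p.2.2.2.2.1 * zpowC F q 3 p.2.2.2.2.2

namespace BoxBasis

/-- Exponent vectors `(n₀, n₁, n₂, n₃)` of the central monomials. -/
abbrev Exps := ℤ × ℤ × ℤ × ℤ

/-- Indices of the candidate basis: even word, odd word, exponents. -/
abbrev Idx := List (Fin 2) × List (Fin 2) × Exps

/-- The free vector space on the candidate basis. -/
abbrev M (F : Type*) [Field F] := Idx →₀ F

/-- The exponent vector of `c_i`. -/
def unitExp (i : ZMod 4) : Exps :=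
  (if i = 0 then 1 else 0, if i = 1 then 1 else 0, if i = 2 then 1 else 0, if i = 3 then 1 else 0)

/-- The coefficient of `x y` in the rewriting of `y x`, where `y` is the odd letter `b` and `x` the
even letter `a`. -/
def coef {F : Type*} [Field F] (q : F) (b a : Fin 2) : F :=
  if b = a then q ^ 2 else (q ^ 2)⁻¹

/-- The index of the central generator that appears in the relation between the odd letter `b` and
the even letter `a`. -/
def cIdx (b a : Fin 2) : ZMod 4 :=
  if b = 0 then (if a = 0 then 0 else 1) else (if a = 0 then 3 else 2)

lemma zmod_cases (i : ZMod 4) : i = 0 ∨ i = 1 ∨ i = 2 ∨ i = 3 := by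
  revert i
  decide

/-! ### The quantum Weyl relation solved for either product -/

section Relation

variable {F : Type*} [Field F] {q : F} {A : Type*} [Ring A] [Algebra F A]

lemma sub_inv_ne_zero (hq : q ≠ 0) (hq2 : q ^ 2 ≠ 1) : q - q⁻¹ ≠ 0 := by
  intro h
  apply hq2
  field_simp at h
  linear_combination h

/-- The rewriting rule for `y x` when the odd letter `y` comes second in its Weyl relation. -/
lemma weyl_iff_right (hq : q ≠ 0) (hq2 : q ^ 2 ≠ 1) (x y c : A) :
    (q - q⁻¹)⁻¹ • (q • (x * y) - q⁻¹ • (y * x)) = c ↔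
      y * x = q ^ 2 • (x * y) + (1 - q ^ 2) • c := by
  have h := sub_inv_ne_zero hq hq2
  rw [inv_smul_eq_iff₀ h]
  constructor
  · intro e
    have e2 : (1 - q ^ 2) • c = -(q • ((q - q⁻¹) • c)) := by
      rw [smul_smul, ← neg_smul]; congr 1; field_simp; ring
    rw [e2, ← e, smul_sub, smul_smul, smul_smul, mul_inv_cancel₀ hq, ← pow_two]
    simp
  · intro e
    rw [e]
    match_scalars <;> field_simp <;> ring

/-- The rewriting rule for `x y` when the odd letter `x` comes first in its Weyl relation. -/
lemma weyl_iff_left (hq : q ≠ 0) (hq2 : q ^ 2 ≠ 1) (x y c : A) :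
    (q - q⁻¹)⁻¹ • (q • (x * y) - q⁻¹ • (y * x)) = c ↔
      x * y = (q ^ 2)⁻¹ • (y * x) + (1 - (q ^ 2)⁻¹) • c := by
  have h := sub_inv_ne_zero hq hq2
  rw [inv_smul_eq_iff₀ h]
  constructor
  · intro e
    have e2 : (1 - (q ^ 2)⁻¹) • c = q⁻¹ • ((q - q⁻¹) • c) := by
      rw [smul_smul]; congr 1; field_simp
    rw [e2, ← e]
    match_scalars <;> field_simp <;> ring
  · intro e
    rw [e]
    match_scalars <;> field_simp <;> ring

end Relation

/-! ### The module of candidate basis vectors -/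

section Rep

variable (F : Type*) [Field F] (q : F)

/-- Left multiplication by the central monomial with exponent vector `e`. -/
def shiftOp (e : Exps) : Module.End F (M F) :=
  Finsupp.lmapDomain F F fun p : Idx => (p.1, p.2.1, e + p.2.2)

/-- Left multiplication by the even letter `a`. -/
def evenOp (a : Fin 2) : Module.End F (M F) :=
  Finsupp.lmapDomain F F fun p : Idx => (a :: p.1, p.2)

/-- The odd letter `b` applied to the basis vector `(u, v, n)`. -/
def oddVec (b : Fin 2) : List (Fin 2) → List (Fin 2) × Exps → M F
  | [], w => Finsupp.single ([], b :: w.1, w.2) 1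
  | a :: u, w => coef q b a • evenOp F a (oddVec b u w) +
      (1 - coef q b a) • shiftOp F (unitExp (cIdx b a)) (Finsupp.single (u, w) 1)

/-- Left multiplication by the odd letter `b`. -/
def oddOp (b : Fin 2) : Module.End F (M F) :=
  Finsupp.linearCombination F fun p : Idx => oddVec F q b p.1 p.2

@[simp] lemma shiftOp_single (e : Exps) (p : Idx) (r : F) :
    shiftOp F e (Finsupp.single p r) = Finsupp.single (p.1, p.2.1, e + p.2.2) r := by
  simp [shiftOp]

@[simp] lemma evenOp_single (a : Fin 2) (p : Idx) (r : F) :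
    evenOp F a (Finsupp.single p r) = Finsupp.single (a :: p.1, p.2) r := by
  simp [evenOp]

@[simp] lemma oddOp_single (b : Fin 2) (p : Idx) :
    oddOp F q b (Finsupp.single p 1) = oddVec F q b p.1 p.2 := by
  simp [oddOp]

lemma end_ext {N : Type*} [AddCommGroup N] [Module F N] {f g : M F →ₗ[F] N}
    (h : ∀ p : Idx, f (Finsupp.single p 1) = g (Finsupp.single p 1)) : f = g := by
  ext p
  simpa using h p

lemma shiftOp_mul (e e' : Exps) : shiftOp F e * shiftOp F e' = shiftOp F (e + e') := by
  apply end_ext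
  intro p
  simp [add_assoc]

lemma shiftOp_zero : shiftOp F 0 = 1 := by
  apply end_ext
  intro p
  simp

lemma shiftOp_comm_even (e : Exps) (a : Fin 2) : Commute (shiftOp F e) (evenOp F a) := by
  apply end_ext
  intro p
  simp

lemma shiftOp_comm_odd (e : Exps) (b : Fin 2) : Commute (shiftOp F e) (oddOp F q b) := by
  apply end_ext
  rintro ⟨u, w⟩
  simp only [Module.End.mul_apply, oddOp_single, shiftOp_single]
  induction u with
  | nil => simp [oddVec]
  | cons a u ih =>
    have h := LinearMap.congr_fun (shiftOp_comm_even F e a).eq (oddVec F q b u w)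
    simp only [Module.End.mul_apply] at h
    simp only [oddVec, map_add, map_smul, h, ih, shiftOp_single]
    simp only [add_left_comm]

/-- The rewriting rule holds in `M`. -/
lemma odd_mul_even (b a : Fin 2) : oddOp F q b * evenOp F a =
    coef q b a • (evenOp F a * oddOp F q b) +
      (1 - coef q b a) • shiftOp F (unitExp (cIdx b a)) := by
  apply end_ext
  intro p
  simp [oddVec]

/-- The action of the generators of `□̃_q` on `M`. -/
def genOp : BTGen → Module.End F (M F)
  | Sum.inl i => if i = 0 then evenOp F 0 else if i = 1 then oddOp F q 0 else
      if i = 2 then evenOp F 1 else oddOp F q 1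
  | Sum.inr (Sum.inl i) => shiftOp F (unitExp i)
  | Sum.inr (Sum.inr i) => shiftOp F (-unitExp i)

lemma shiftOp_comm_gen (e : Exps) (g : BTGen) : Commute (shiftOp F e) (genOp F q g) := by
  rcases g with i | i | i
  · simp only [genOp]
    split_ifs
    exacts [shiftOp_comm_even F e 0, shiftOp_comm_odd F q e 0, shiftOp_comm_even F e 1,
      shiftOp_comm_odd F q e 1]
  · simp only [genOp, Commute, SemiconjBy, shiftOp_mul, add_comm]
  · simp only [genOp, Commute, SemiconjBy, shiftOp_mul, add_comm]

/-- The centrality relations of `□̃_q` quantify over the whole free algebra, so commutation with the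
generators has to be extended to all products and sums. -/
lemma shiftOp_comm_lift (e : Exps) (a : FreeAlgebra F BTGen) :
    Commute (shiftOp F e) (FreeAlgebra.lift F (genOp F q) a) := by
  induction a using FreeAlgebra.induction with
  | grade0 r => rw [AlgHom.commutes]; exact (Algebra.commutes r _).symm
  | grade1 g => rw [FreeAlgebra.lift_ι_apply]; exact shiftOp_comm_gen F q e g
  | mul a b ha hb => rw [map_mul]; exact ha.mul_right hb
  | add a b ha hb => rw [map_add]; exact ha.add_right hb

lemma genOp_rel (hq : q ≠ 0) (hq2 : q ^ 2 ≠ 1) {a b : FreeAlgebra F BTGen}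
    (h : BoxTRel F q a b) :
    FreeAlgebra.lift F (genOp F q) a = FreeAlgebra.lift F (genOp F q) b := by
  induction h with
  | c_cinv i => simp [btc, btcinv, genOp, shiftOp_mul, shiftOp_zero]
  | cinv_c i => simp [btc, btcinv, genOp, shiftOp_mul, shiftOp_zero]
  | central_c i a =>
    simp only [map_mul, btc, FreeAlgebra.lift_ι_apply]
    exact shiftOp_comm_lift F q _ a
  | central_cinv i a =>
    simp only [map_mul, btcinv, FreeAlgebra.lift_ι_apply]
    exact shiftOp_comm_lift F q _ a
  | weyl i =>
    simp only [map_mul, map_smul, map_sub, btx, btc, FreeAlgebra.lift_ι_apply]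
    have h00 := odd_mul_even F q 0 0
    have h01 := odd_mul_even F q 0 1
    have h10 := odd_mul_even F q 1 0
    have h11 := odd_mul_even F q 1 1
    simp only [coef, cIdx, if_true, zero_ne_one, one_ne_zero, if_false] at h00 h01 h10 h11
    have n1 : (1 : ZMod 4) ≠ 0 := by decide
    have n2 : (2 : ZMod 4) ≠ 0 := by decide
    have n3 : (2 : ZMod 4) ≠ 1 := by decide
    have n4 : (3 : ZMod 4) ≠ 0 := by decide
    have n5 : (3 : ZMod 4) ≠ 1 := by decide
    have n6 : (3 : ZMod 4) ≠ 2 := by decide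
    rcases zmod_cases i with rfl | rfl | rfl | rfl
    · refine (weyl_iff_right (A := Module.End F (M F)) hq hq2 _ _ _).2 ?_
      simpa [genOp, n1] using h00
    · refine (weyl_iff_left (A := Module.End F (M F)) hq hq2 _ _ _).2 ?_
      rw [show (1 + 1 : ZMod 4) = 2 from rfl]
      simpa [genOp, n1, n2, n3] using h01
    · refine (weyl_iff_right (A := Module.End F (M F)) hq hq2 _ _ _).2 ?_
      rw [show (2 + 1 : ZMod 4) = 3 from rfl]
      simpa [genOp, n2, n3, n4, n5, n6] using h11
    · refine (weyl_iff_left (A := Module.End F (M F)) hq hq2 _ _ _).2 ?_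
      rw [show (3 + 1 : ZMod 4) = 0 from rfl]
      simpa [genOp, n4, n5, n6] using h10

/-- The `□̃_q`-module structure on `M`. -/
def rep (hq : q ≠ 0) (hq2 : q ^ 2 ≠ 1) : BoxT F q →ₐ[F] Module.End F (M F) :=
  RingQuot.liftAlgHom F ⟨FreeAlgebra.lift F (genOp F q), fun _ _ h => genOp_rel F q hq hq2 h⟩

lemma rep_mk (hq : q ≠ 0) (hq2 : q ^ 2 ≠ 1) (a : FreeAlgebra F BTGen) :
    rep F q hq hq2 (RingQuot.mkAlgHom F (BoxTRel F q) a) = FreeAlgebra.lift F (genOp F q) a := by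
  simp [rep]

end Rep

/-! ### Comparison of the module with the algebra -/

section Box

variable (F : Type*) [Field F] (q : F)

/-- The even letter `a` in `□̃_q`. -/
def evenX (a : Fin 2) : BoxT F q := if a = 0 then xT F q 0 else xT F q 2

/-- The odd letter `b` in `□̃_q`. -/
def oddX (b : Fin 2) : BoxT F q := if b = 0 then xT F q 1 else xT F q 3

/-- The central monomial with exponent vector `n`. -/
def cMon (n : Exps) : BoxT F q :=
  zpowC F q 0 n.1 * zpowC F q 1 n.2.1 * zpowC F q 2 n.2.2.1 * zpowC F q 3 n.2.2.2

lemma basisElt_eq (p : Idx) : basisElt F q p =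
    (p.1.map (evenX F q)).prod * ((p.2.1.map (oddX F q)).prod * cMon F q p.2.2) := by
  simp only [basisElt, cMon, mul_assoc]
  rfl

lemma cT_mul_cinvT (i : ZMod 4) : cT F q i * cinvT F q i = 1 := by
  rw [cT, cinvT, ← map_mul, RingQuot.mkAlgHom_rel F (BoxTRel.c_cinv i), map_one]

lemma cinvT_mul_cT (i : ZMod 4) : cinvT F q i * cT F q i = 1 := by
  rw [cT, cinvT, ← map_mul, RingQuot.mkAlgHom_rel F (BoxTRel.cinv_c i), map_one]

lemma cT_comm (i : ZMod 4) (y : BoxT F q) : Commute (cT F q i) y := by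
  obtain ⟨a, rfl⟩ := RingQuot.mkAlgHom_surjective F (BoxTRel F q) y
  rw [Commute, SemiconjBy, cT, ← map_mul, RingQuot.mkAlgHom_rel F (BoxTRel.central_c i a), map_mul]

/-- `c_i` as a unit of `□̃_q`. -/
def cUnit (i : ZMod 4) : (BoxT F q)ˣ :=
  ⟨cT F q i, cinvT F q i, cT_mul_cinvT F q i, cinvT_mul_cT F q i⟩

lemma zpowC_eq (i : ZMod 4) (n : ℤ) : zpowC F q i n = ((cUnit F q i ^ n : (BoxT F q)ˣ) : BoxT F q) := by
  cases n with
  | ofNat n => simp [zpowC, cUnit]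
  | negSucc n =>
    rw [zpow_negSucc, ← inv_pow, Units.val_pow_eq_pow_val]
    rfl

lemma cT_mul_zpowC (i : ZMod 4) (n : ℤ) : cT F q i * zpowC F q i n = zpowC F q i (1 + n) := by
  rw [zpowC_eq, zpowC_eq, zpow_one_add, Units.val_mul]
  rfl

lemma cT_mul_cMon (i : ZMod 4) (n : Exps) :
    cT F q i * cMon F q n = cMon F q (unitExp i + n) := by
  obtain ⟨n0, n1, n2, n3⟩ := n
  have h := fun j m => (cT_comm F q i (zpowC F q j m)).eq
  have e1 : (1 : ZMod 4) ≠ 0 := by decide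
  have e2 : (2 : ZMod 4) ≠ 0 := by decide
  have e3 : (2 : ZMod 4) ≠ 1 := by decide
  have e4 : (3 : ZMod 4) ≠ 0 := by decide
  have e5 : (3 : ZMod 4) ≠ 1 := by decide
  have e6 : (3 : ZMod 4) ≠ 2 := by decide
  rcases zmod_cases i with rfl | rfl | rfl | rfl <;>
    simp only [cMon, unitExp, Prod.mk_add_mk, if_true, if_false, zero_add, e1, e2, e3, e4, e5, e6,
      e1.symm, e2.symm, e3.symm, e4.symm, e5.symm, e6.symm, ← cT_mul_zpowC]
  · simp only [mul_assoc]
  · rw [← mul_assoc, ← mul_assoc, ← mul_assoc, h]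
    simp only [mul_assoc]
  · rw [← mul_assoc, ← mul_assoc, ← mul_assoc, h, mul_assoc (zpowC F q 0 n0), h]
    simp only [mul_assoc]
  · rw [(cT_comm F q 3 _).eq, mul_assoc, ← (cT_comm F q 3 _).eq]

lemma cT_mul_basisElt (i : ZMod 4) (p : Idx) :
    cT F q i * basisElt F q p = basisElt F q (p.1, p.2.1, unitExp i + p.2.2) := by
  rw [basisElt_eq, basisElt_eq, ← mul_assoc, (cT_comm F q i _).eq, mul_assoc, ← mul_assoc (cT F q i),
    (cT_comm F q i _).eq, mul_assoc, cT_mul_cMon]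

lemma cinvT_mul_basisElt (i : ZMod 4) (p : Idx) :
    cinvT F q i * basisElt F q p = basisElt F q (p.1, p.2.1, -unitExp i + p.2.2) := by
  have h := cT_mul_basisElt F q i (p.1, p.2.1, -unitExp i + p.2.2)
  simp only [add_neg_cancel_left] at h
  rw [← h, ← mul_assoc, cinvT_mul_cT, one_mul]

/-- The rewriting rule holds in `□̃_q`. -/
lemma oddX_mul_evenX (hq : q ≠ 0) (hq2 : q ^ 2 ≠ 1) (b a : Fin 2) :
    oddX F q b * evenX F q a = coef q b a • (evenX F q a * oddX F q b) +
      (1 - coef q b a) • cT F q (cIdx b a) := by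
  have h : ∀ i : ZMod 4, (q - q⁻¹)⁻¹ • (q • (xT F q i * xT F q (i + 1)) -
      q⁻¹ • (xT F q (i + 1) * xT F q i)) = cT F q i := by
    intro i
    have := RingQuot.mkAlgHom_rel F (BoxTRel.weyl (q := q) i)
    simp only [map_smul, map_sub, map_mul] at this
    exact this
  have h0 := (weyl_iff_right hq hq2 _ _ _).1 (h 0)
  have h1 := (weyl_iff_left hq hq2 _ _ _).1 (h 1)
  have h2 := (weyl_iff_right hq hq2 _ _ _).1 (h 2)
  have h3 := (weyl_iff_left hq hq2 _ _ _).1 (h 3)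
  rw [show (0 + 1 : ZMod 4) = 1 from rfl] at h0
  rw [show (1 + 1 : ZMod 4) = 2 from rfl] at h1
  rw [show (2 + 1 : ZMod 4) = 3 from rfl] at h2
  rw [show (3 + 1 : ZMod 4) = 0 from rfl] at h3
  fin_cases b <;> fin_cases a <;> simp [oddX, evenX, coef, cIdx] <;> assumption

/-- The linear map sending the basis vector `(u, v, n)` of `M` to the element `u v c^n`. -/
def toBox : M F →ₗ[F] BoxT F q := Finsupp.linearCombination F (basisElt F q)

@[simp] lemma toBox_single (p : Idx) : toBox F q (Finsupp.single p 1) = basisElt F q p := by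
  simp [toBox]

lemma toBox_shiftOp (i : ZMod 4) (m : M F) :
    toBox F q (shiftOp F (unitExp i) m) = cT F q i * toBox F q m := by
  have : toBox F q ∘ₗ shiftOp F (unitExp i) = LinearMap.mulLeft F (cT F q i) ∘ₗ toBox F q := by
    apply end_ext
    intro p
    simp [cT_mul_basisElt]
  exact LinearMap.congr_fun this m

lemma toBox_shiftOp_neg (i : ZMod 4) (m : M F) :
    toBox F q (shiftOp F (-unitExp i) m) = cinvT F q i * toBox F q m := by
  have : toBox F q ∘ₗ shiftOp F (-unitExp i) = LinearMap.mulLeft F (cinvT F q i) ∘ₗ toBox F q := by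
    apply end_ext
    intro p
    simp [cinvT_mul_basisElt]
  exact LinearMap.congr_fun this m

lemma toBox_evenOp (a : Fin 2) (m : M F) :
    toBox F q (evenOp F a m) = evenX F q a * toBox F q m := by
  have : toBox F q ∘ₗ evenOp F a = LinearMap.mulLeft F (evenX F q a) ∘ₗ toBox F q := by
    apply end_ext
    intro p
    simp [basisElt_eq, mul_assoc]
  exact LinearMap.congr_fun this m

lemma toBox_oddVec (hq : q ≠ 0) (hq2 : q ^ 2 ≠ 1) (b : Fin 2) (u : List (Fin 2))
    (w : List (Fin 2) × Exps) :
    toBox F q (oddVec F q b u w) = oddX F q b * basisElt F q (u, w) := by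
  induction u with
  | nil => simp [oddVec, basisElt_eq, mul_assoc]
  | cons a u ih =>
    have h : basisElt F q (a :: u, w) = evenX F q a * basisElt F q (u, w) := by
      simp [basisElt_eq, mul_assoc]
    rw [oddVec, map_add, map_smul, map_smul, toBox_evenOp, ih, toBox_shiftOp, toBox_single, h,
      ← mul_assoc, ← mul_assoc, oddX_mul_evenX F q hq hq2, add_mul, smul_mul_assoc, smul_mul_assoc]

lemma toBox_oddOp (hq : q ≠ 0) (hq2 : q ^ 2 ≠ 1) (b : Fin 2) (m : M F) :
    toBox F q (oddOp F q b m) = oddX F q b * toBox F q m := by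
  have : toBox F q ∘ₗ oddOp F q b = LinearMap.mulLeft F (oddX F q b) ∘ₗ toBox F q := by
    apply end_ext
    rintro ⟨u, w⟩
    simp [toBox_oddVec F q hq hq2]
  exact LinearMap.congr_fun this m

/-- The map `toBox` intertwines the operator of a generator with left multiplication by it. -/
lemma toBox_genOp (hq : q ≠ 0) (hq2 : q ^ 2 ≠ 1) (g : BTGen) (m : M F) :
    toBox F q (genOp F q g m) =
      RingQuot.mkAlgHom F (BoxTRel F q) (FreeAlgebra.ι F g) * toBox F q m := by
  rcases g with i | i | i
  · rcases zmod_cases i with rfl | rfl | rfl | rfl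
    · exact toBox_evenOp F q 0 m
    · exact toBox_oddOp F q hq hq2 0 m
    · exact toBox_evenOp F q 1 m
    · exact toBox_oddOp F q hq hq2 1 m
  · exact toBox_shiftOp F q i m
  · exact toBox_shiftOp_neg F q i m

lemma toBox_lift (hq : q ≠ 0) (hq2 : q ^ 2 ≠ 1) (a : FreeAlgebra F BTGen) (m : M F) :
    toBox F q (FreeAlgebra.lift F (genOp F q) a m) =
      RingQuot.mkAlgHom F (BoxTRel F q) a * toBox F q m := by
  induction a using FreeAlgebra.induction generalizing m with
  | grade0 r => simp [Algebra.smul_def]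
  | grade1 g => rw [FreeAlgebra.lift_ι_apply, toBox_genOp F q hq hq2]
  | mul a b ha hb => rw [map_mul, Module.End.mul_apply, ha, hb, map_mul, mul_assoc]
  | add a b ha hb => rw [map_add, LinearMap.add_apply, map_add, ha, hb, map_add, add_mul]

/-- The basis vector of `M` indexed by the empty words and the zero exponent vector. -/
def vac : M F := Finsupp.single ([], [], 0) 1

lemma toBox_vac : toBox F q (vac F) = 1 := by
  simp [vac, basisElt_eq, cMon, zpowC_eq]

lemma toBox_surjective (hq : q ≠ 0) (hq2 : q ^ 2 ≠ 1) : Function.Surjective (toBox F q) := by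
  intro y
  obtain ⟨a, rfl⟩ := RingQuot.mkAlgHom_surjective F (BoxTRel F q) y
  exact ⟨_, by rw [toBox_lift F q hq hq2 a (vac F), toBox_vac, mul_one]⟩

variable (hq : q ≠ 0) (hq2 : q ^ 2 ≠ 1)

lemma rep_evenX (a : Fin 2) : rep F q hq hq2 (evenX F q a) = evenOp F a := by
  fin_cases a <;> simp only [evenX, xT, btx] <;>
    simp [rep_mk, genOp, show (2 : ZMod 4) ≠ 0 by decide, show (2 : ZMod 4) ≠ 1 by decide]

lemma rep_oddX (b : Fin 2) : rep F q hq hq2 (oddX F q b) = oddOp F q b := by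
  fin_cases b <;> simp only [oddX, xT, btx] <;>
    simp [rep_mk, genOp, show (1 : ZMod 4) ≠ 0 by decide, show (3 : ZMod 4) ≠ 0 by decide,
      show (3 : ZMod 4) ≠ 1 by decide, show (3 : ZMod 4) ≠ 2 by decide]

lemma rep_cT (i : ZMod 4) : rep F q hq hq2 (cT F q i) = shiftOp F (unitExp i) := by
  simp [cT, btc, rep_mk, genOp]

lemma rep_cinvT (i : ZMod 4) : rep F q hq hq2 (cinvT F q i) = shiftOp F (-unitExp i) := by
  simp [cinvT, btcinv, rep_mk, genOp]

lemma shiftOp_pow (e : Exps) (n : ℕ) : shiftOp F e ^ n = shiftOp F (n • e) := by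
  induction n with
  | zero => rw [pow_zero, zero_smul, shiftOp_zero]
  | succ n ih => rw [pow_succ, ih, shiftOp_mul, succ_nsmul]

lemma rep_zpowC (i : ZMod 4) (n : ℤ) :
    rep F q hq hq2 (zpowC F q i n) = shiftOp F (n • unitExp i) := by
  cases n with
  | ofNat n => simp [zpowC, rep_cT, shiftOp_pow]
  | negSucc n =>
    rw [zpowC, map_pow, rep_cinvT, shiftOp_pow, negSucc_zsmul, smul_neg]

lemma rep_cMon (n : Exps) : rep F q hq hq2 (cMon F q n) = shiftOp F n := by
  simp only [cMon, map_mul, rep_zpowC, shiftOp_mul]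
  congr 1
  obtain ⟨n0, n1, n2, n3⟩ := n
  have e1 : (1 : ZMod 4) ≠ 0 := by decide
  have e2 : (2 : ZMod 4) ≠ 0 := by decide
  have e3 : (2 : ZMod 4) ≠ 1 := by decide
  have e4 : (3 : ZMod 4) ≠ 0 := by decide
  have e5 : (3 : ZMod 4) ≠ 1 := by decide
  have e6 : (3 : ZMod 4) ≠ 2 := by decide
  simp [unitExp, e1, e2, e3, e4, e5, e6, e1.symm, e2.symm, e3.symm, e4.symm, e5.symm, e6.symm]

/-- Applied to the vector of the empty words, `u v c^n` returns the basis vector `(u, v, n)`: the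
odd letters act while the even word is still empty, so no rewriting takes place. -/
lemma rep_basisElt (p : Idx) :
    rep F q hq hq2 (basisElt F q p) (vac F) = Finsupp.single p 1 := by
  obtain ⟨u, v, n⟩ := p
  rw [basisElt_eq, map_mul, map_mul, rep_cMon, Module.End.mul_apply, Module.End.mul_apply, vac,
    shiftOp_single, add_zero]
  have hv : rep F q hq hq2 (v.map (oddX F q)).prod (Finsupp.single ([], [], n) 1) =
      Finsupp.single ([], v, n) 1 := by
    induction v with
    | nil => simp
    | cons b v ih =>
      rw [List.map_cons, List.prod_cons, map_mul, Module.End.mul_apply, ih, rep_oddX, oddOp_single]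
      rfl
  rw [hv]
  induction u with
  | nil => simp
  | cons a u ih =>
    rw [List.map_cons, List.prod_cons, map_mul, Module.End.mul_apply, ih, rep_evenX, evenOp_single]

end Box

end BoxBasis

/-- Proposition 6.16(iv): the elements `u v c₀^{n₀} c₁^{n₁} c₂^{n₂} c₃^{n₃}` form a basis
of the vector space `□̃_q`. -/
theorem stmt8 (F : Type*) [Field F] (q : F) (hq : q ≠ 0) (hq2 : q ^ 2 ≠ 1) :
    LinearIndependent F (basisElt F q) ∧
      Submodule.span F (Set.range (basisElt F q)) = ⊤ := by
  constructor
  · apply LinearIndependent.of_comp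
      (LinearMap.applyₗ (BoxBasis.vac F) ∘ₗ (BoxBasis.rep F q hq hq2).toLinearMap)
    have h : (LinearMap.applyₗ (BoxBasis.vac F) ∘ₗ (BoxBasis.rep F q hq hq2).toLinearMap) ∘
        basisElt F q = fun p => Finsupp.single p (1 : F) :=
      funext fun p => BoxBasis.rep_basisElt F q hq hq2 p
    rw [h]
    exact Finsupp.linearIndependent_single_one F _
  · rw [← Finsupp.range_linearCombination]
    exact LinearMap.range_eq_top.2 (BoxBasis.toBox_surjective F q hq hq2)
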